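/- arXiv:2305.15558 — 4 statements merged into one kernel-verified Lean document; each statement's English description precedes it below -/
import Mathlib

section
/- For every P ∈ P(R) and every integer t ≥ 1, the iterates of Algorithm 1 satisfy Δ(λ_t)/μ ≤ B/μ + E_P[C_R] − E_{P^{t-1}}[C_R] + λ_t (E_P[C(·, b^{t-1})] − v) + (1/(2α))(‖P − P^{t-1}‖² − ‖P − P^t‖²) + (α/2)|R|Θ², where Δ(λ_t) := (1/2)(λ_{t+1}² − λ_t²) and B = (1/2) μ² (4Θ² + v²). -/
open Finset

/-!
A drift-plus-penalty argument. Projecting onto `[0, ∞)` does not increase the square, so the drift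
`(λ_{t+1}² - λ_t²) / (2μ)` is at most `λ_t G + μ G² / 2` with `G = E_{P^t}[C] - v`, and
`G² ≤ 4Θ² + v²` because `0 ≤ E_{P^t}[C] ≤ 2Θ` and `v > 0`. The term `λ_t G` is controlled by the
optimality of `P^t`: the proximal objective is strongly convex, so its value at `Q` exceeds its
minimum by at least `‖Q - P^t‖² / (2α)` (`prox_three_point`). The change of reservation cost from
`P^{t-1}` to `P^t` is then absorbed by the proximal term through Young's inequality
(`young_inner`), at the price of `(α/2) ‖C_R‖² ≤ (α/2) |R| Θ²`.
-/

/-- Three-point inequality for the proximal step: a minimizer `x` of `⟪w, ·⟫ + k ‖· - z‖²` over a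
convex set beats every other point `y` by the extra margin `k ‖y - x‖²`. Minimality is needed only
along the segment from `x` to `y`. -/
lemma prox_three_point {E : Type*} [NormedAddCommGroup E] [InnerProductSpace ℝ E]
    (w x y z : E) (k : ℝ) (hk : 0 ≤ k)
    (hmin : ∀ s : ℝ, 0 < s → s ≤ 1 →
      inner ℝ w x + k * ‖x - z‖^2 ≤
        inner ℝ w (x + s • (y - x)) + k * ‖x + s • (y - x) - z‖^2) :
    inner ℝ w x + k * ‖x - z‖^2 ≤ inner ℝ w y + k * ‖y - z‖^2 - k * ‖y - x‖^2 := by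
  obtain ⟨d, rfl⟩ : ∃ d, y = x + d := ⟨y - x, by abel⟩
  simp only [add_sub_cancel_left] at hmin ⊢
  have expand : ∀ s : ℝ, ‖x + s • d - z‖^2
      = ‖x - z‖^2 + 2 * s * inner ℝ (x - z) d + s^2 * ‖d‖^2 := by
    intro s
    rw [show x + s • d - z = (x - z) + s • d by abel, norm_add_sq_real, inner_smul_right,
      norm_smul, mul_pow, Real.norm_eq_abs, sq_abs]
    ring
  have expand_one := expand 1
  rw [one_smul] at expand_one
  -- The directional derivative of the objective at `x` towards `y` is nonnegative.
  have hderiv : 0 ≤ inner ℝ w d + 2 * k * inner ℝ (x - z) d := by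
    by_contra! hneg
    set A := inner ℝ w d + 2 * k * inner ℝ (x - z) d with hA
    have hB : 0 ≤ k * ‖d‖^2 := by positivity
    have hden : 0 < k * ‖d‖^2 - A := by linarith
    -- At this step size the increment `s (A + s k ‖d‖²)` of the objective is negative.
    obtain ⟨s, hs⟩ : ∃ s, s = -A / (k * ‖d‖^2 - A) := ⟨_, rfl⟩
    have hs0 : 0 < s := by rw [hs]; exact div_pos (by linarith) hden
    have hs1 : s ≤ 1 := by rw [hs, div_le_one hden]; linarith
    have hseq : s * (k * ‖d‖^2 - A) = -A := by rw [hs]; field_simp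
    have h := hmin s hs0 hs1
    rw [expand s, inner_add_right, inner_smul_right] at h
    have h2 : 0 ≤ s * (A + s * (k * ‖d‖^2)) := by rw [hA]; linarith
    have h3 := nonneg_of_mul_nonneg_right h2 hs0
    nlinarith [mul_neg_of_pos_of_neg hs0 hneg]
  rw [inner_add_right, expand_one]
  linarith

lemma young_inner {E : Type*} [NormedAddCommGroup E] [InnerProductSpace ℝ E]
    (c d : E) (α : ℝ) (hα : 0 < α) :
    -inner ℝ c d ≤ 1 / (2 * α) * ‖d‖^2 + α / 2 * ‖c‖^2 := by
  have h := sq_nonneg ‖α • c + d‖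
  rw [norm_add_sq_real, norm_smul, mul_pow, Real.norm_eq_abs, sq_abs, real_inner_smul_left] at h
  have h2 : 1 / (2 * α) * ‖d‖^2 + α / 2 * ‖c‖^2 + inner ℝ c d
      = (α^2 * ‖c‖^2 + 2 * (α * inner ℝ c d) + ‖d‖^2) / (2 * α) := by
    field_simp
    ring
  have h3 : 0 ≤ (α^2 * ‖c‖^2 + 2 * (α * inner ℝ c d) + ‖d‖^2) / (2 * α) := by positivity
  linarith

lemma max_zero_sq_le (x : ℝ) : (max 0 x)^2 ≤ x^2 := by
  rcases le_total 0 x with h | h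
  · rw [max_eq_right h]
  · rw [max_eq_left h]
    nlinarith [sq_nonneg x]

theorem stmt1
    {R : Type*} [Fintype R] [Nonempty R]
    (CR : R → ℝ) (CV CT : R → R → ℝ) (Θ v α μ : ℝ)
    (hΘ : 0 < Θ) (hv : 0 < v) (hα : 0 < α) (hμ : 0 < μ)
    (hCR : ∀ a : R, 0 ≤ CR a ∧ CR a ≤ Θ)
    (hCV : ∀ a c : R, 0 ≤ CV a c ∧ CV a c ≤ Θ)
    (hCT : ∀ a c : R, 0 ≤ CT a c ∧ CT a c ≤ Θ)
    (b : ℕ → R) (P : ℕ → EuclideanSpace ℝ R) (lam : ℕ → ℝ)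
    (hP0 : (∀ a : R, 0 ≤ P 0 a) ∧ ∑ a : R, P 0 a = 1)
    (hlam1 : 0 ≤ lam 1)
    (hPmem : ∀ t : ℕ, 1 ≤ t → (∀ a : R, 0 ≤ P t a) ∧ ∑ a : R, P t a = 1)
    (hPmin : ∀ t : ℕ, 1 ≤ t → ∀ Q : EuclideanSpace ℝ R,
      ((∀ a : R, 0 ≤ Q a) ∧ ∑ a : R, Q a = 1) →
      (∑ a : R, P t a * CR a) +
        lam t * ((∑ a : R, P t a * (CV a (b (t-1)) + CT a (b (t-1)))) - v) +
        (1/(2*α)) * ‖P t - P (t-1)‖^2 ≤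
      (∑ a : R, Q a * CR a) +
        lam t * ((∑ a : R, Q a * (CV a (b (t-1)) + CT a (b (t-1)))) - v) +
        (1/(2*α)) * ‖Q - P (t-1)‖^2)
    (hlam : ∀ t : ℕ, 1 ≤ t →
      lam (t+1) = max 0 (lam t + μ * ((∑ a : R, P t a * (CV a (b (t-1)) + CT a (b (t-1)))) - v)))
    (Q : EuclideanSpace ℝ R) (hQ : (∀ a : R, 0 ≤ Q a) ∧ ∑ a : R, Q a = 1)
    (t : ℕ) (ht : 1 ≤ t) :
    (1/2) * ((lam (t+1))^2 - (lam t)^2) / μ ≤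
      ((1/2) * μ^2 * (4*Θ^2 + v^2)) / μ +
      (∑ a : R, Q a * CR a) - (∑ a : R, P (t-1) a * CR a) +
      lam t * ((∑ a : R, Q a * (CV a (b (t-1)) + CT a (b (t-1)))) - v) +
      (1/(2*α)) * (‖Q - P (t-1)‖^2 - ‖Q - P t‖^2) +
      (α/2) * (Fintype.card R : ℝ) * Θ^2 := by
  have inner_eq : ∀ (f : R → ℝ) (X : EuclideanSpace ℝ R),
      inner ℝ (WithLp.toLp 2 f) X = ∑ a : R, X a * f a := by
    intro f X
    simp [PiLp.inner_apply]
  obtain ⟨hP, hPs⟩ := hPmem t ht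
  have hmin := hPmin t ht
  have hl := hlam t ht
  clear hPmin hlam hPmem
  set l := lam t
  set C : R → ℝ := fun a => CV a (b (t-1)) + CT a (b (t-1)) with hC
  -- The linear part of the objective, up to the constant `-l * v`, is the pairing with `CR + l C`.
  have lin : ∀ X : EuclideanSpace ℝ R,
      inner ℝ (WithLp.toLp 2 (fun a => CR a + l * C a)) X
        = (∑ a : R, X a * CR a) + l * ∑ a : R, X a * C a := by
    intro X
    rw [inner_eq, Finset.mul_sum, ← Finset.sum_add_distrib]
    exact Finset.sum_congr rfl fun a _ => by ring
  have h3 := prox_three_point (WithLp.toLp 2 (fun a => CR a + l * C a)) (P t) Q (P (t-1))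
    (1 / (2 * α)) (by positivity) (by
      intro s hs0 hs1
      have h := hmin (P t + s • (Q - P t)) ⟨fun a => by
          have h1 := mul_nonneg hs0.le (hQ.1 a)
          have h2 := mul_nonneg (sub_nonneg.2 hs1) (hP a)
          simp only [PiLp.add_apply, PiLp.smul_apply, PiLp.sub_apply, smul_eq_mul]
          linarith, by
          simp only [PiLp.add_apply, PiLp.smul_apply, PiLp.sub_apply, smul_eq_mul]
          rw [Finset.sum_add_distrib, ← Finset.mul_sum, Finset.sum_sub_distrib, hPs, hQ.2]
          ring⟩
      rw [lin, lin]
      linarith)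
  rw [lin, lin] at h3
  have hy := young_inner (WithLp.toLp 2 CR) (P t - P (t-1)) α hα
  rw [inner_sub_right, inner_eq, inner_eq] at hy
  have hn : ‖(WithLp.toLp 2 CR : EuclideanSpace ℝ R)‖^2 ≤ (Fintype.card R : ℝ) * Θ^2 := by
    rw [EuclideanSpace.norm_sq_eq]
    calc _ ≤ ∑ _a : R, Θ^2 := Finset.sum_le_sum fun a _ => by
          rw [Real.norm_eq_abs, sq_abs]
          exact pow_le_pow_left₀ (hCR a).1 (hCR a).2 2
      _ = _ := by simp
  have hn' := mul_le_mul_of_nonneg_left hn (by positivity : 0 ≤ α / 2)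
  have hE0 : 0 ≤ ∑ a : R, P t a * C a := Finset.sum_nonneg fun a _ =>
    mul_nonneg (hP a) (add_nonneg (hCV a _).1 (hCT a _).1)
  have hE1 : ∑ a : R, P t a * C a ≤ 2 * Θ := by
    calc _ ≤ ∑ a : R, P t a * (2 * Θ) := Finset.sum_le_sum fun a _ =>
          mul_le_mul_of_nonneg_left
            (by have := (hCV a (b (t-1))).2; have := (hCT a (b (t-1))).2; simp only [hC]; linarith)
            (hP a)
      _ = _ := by rw [← Finset.sum_mul, hPs, one_mul]
  have hdrift : (1/2) * ((lam (t+1))^2 - l^2) / μ ≤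
      ((1/2) * μ^2 * (4*Θ^2 + v^2)) / μ + l * ((∑ a : R, P t a * C a) - v) := by
    have hsq := max_zero_sq_le (l + μ * ((∑ a : R, P t a * C a) - v))
    rw [← hl] at hsq
    have hG : ((∑ a : R, P t a * C a) - v)^2 ≤ 4*Θ^2 + v^2 := by
      nlinarith [mul_nonneg hE0 hv.le]
    have hG' := mul_le_mul_of_nonneg_left hG (sq_nonneg μ)
    rw [div_add' _ _ _ hμ.ne', div_le_div_iff_of_pos_right hμ]
    linarith
  linarith
end

section
/- Assume Slater's condition: there exist P̃ ∈ P(R) and η > 0 such that E_{P̃}[C(·, b)] − v ≤ −η for every b ∈ R. Assume also λ_1 = 0 and v ≤ 2Θ. Then for any positive integer ℵ, the dual variables of Algorithm 1 satisfy λ_t ≤ θ ℵ for every t ≥ 1, where ϱ = μ(2Θ − v), χ = (1/(η ℵ)) ( (1/2) μ (4Θ² + v²) + (α/2)|R|Θ² + 1/(α(ℵ+1)) + Θ ) + ϱ(ℵ+2)/(2ℵ), and θ = max{ϱ, χ}. -/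
/-!
The proof is a drift argument for `λ²` over windows of `ℵ + 1` consecutive steps.

The objective minimised by `P^t` is linear plus a quadratic, so `prox_three_point` compares `P^t` with
the Slater point `P̃` and gives
`λ_t g_t ≤ Θ - η λ_t + (1/(2α)) (‖P̃ - P^{t-1}‖² - ‖P̃ - P^t‖²)`, where `g_t` is the constraint value.
Together with `λ_{t+1}² ≤ (λ_t + μ g_t)²` and `g_t² ≤ 4Θ² + v²` this bounds the one-step drift.

Summing over a window of length `ℵ + 1` telescopes the distances, each squared distance in the simplex
being at most `2`. Since `λ` grows by at most `ϱ` per step, every dual variable in the window is close to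
the final one, so either `λ` has not increased over the window, or its final value is at most `χ ℵ`
(`drift_bound`). The first `ℵ + 1` dual variables are at most `ϱ ℵ` because `λ_1 = 0`, and strong
induction in steps of `ℵ + 1` finishes the proof.
-/

open Finset

/-- Three-point inequality for a proximal step over the simplex: optimality of `p` is tested at the points
`p + τ (q - p)`, and the strong convexity term `c ‖q - p‖²` appears as `τ → 0`. -/
lemma prox_three_point_s2 {R : Type*} [Fintype R] (p z q : EuclideanSpace ℝ R) (f : R → ℝ) (c : ℝ)
    (hc : 0 ≤ c)
    (hp : (∀ a : R, 0 ≤ p a) ∧ ∑ a : R, p a = 1)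
    (hq : (∀ a : R, 0 ≤ q a) ∧ ∑ a : R, q a = 1)
    (hmin : ∀ Q : EuclideanSpace ℝ R, ((∀ a : R, 0 ≤ Q a) ∧ ∑ a : R, Q a = 1) →
      ∑ a : R, p a * f a + c * ‖p - z‖ ^ 2 ≤ ∑ a : R, Q a * f a + c * ‖Q - z‖ ^ 2) :
    ∑ a : R, p a * f a + c * ‖p - z‖ ^ 2 + c * ‖q - p‖ ^ 2
      ≤ ∑ a : R, q a * f a + c * ‖q - z‖ ^ 2 := by
  have key : ∀ τ : ℝ, 0 < τ → τ ≤ 1 →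
      ∑ a : R, p a * f a + c * ‖p - z‖ ^ 2 + (1 - τ) * (c * ‖q - p‖ ^ 2)
        ≤ ∑ a : R, q a * f a + c * ‖q - z‖ ^ 2 := by
    intro τ h0 h1
    have hlin : ∀ g : R → ℝ, ∑ a : R, (p + τ • (q - p)) a * g a
        = (1 - τ) * ∑ a : R, p a * g a + τ * ∑ a : R, q a * g a := by
      intro g
      rw [mul_sum, mul_sum, ← sum_add_distrib]
      refine sum_congr rfl fun a _ => ?_
      simp only [PiLp.add_apply, PiLp.smul_apply, PiLp.sub_apply, smul_eq_mul]
      ring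
    have hmem : (∀ a : R, 0 ≤ (p + τ • (q - p)) a) ∧ ∑ a : R, (p + τ • (q - p)) a = 1 := by
      constructor
      · intro a
        have e : (p + τ • (q - p)) a = (1 - τ) * p a + τ * q a := by
          simp only [PiLp.add_apply, PiLp.smul_apply, PiLp.sub_apply, smul_eq_mul]
          ring
        rw [e]
        exact add_nonneg (mul_nonneg (by linarith) (hp.1 a)) (mul_nonneg h0.le (hq.1 a))
      · have := hlin (fun _ => 1)
        simp only [mul_one] at this
        rw [this, hp.2, hq.2]
        ring
    have hnorm : ‖p + τ • (q - p) - z‖ ^ 2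
        = (1 - τ) * ‖p - z‖ ^ 2 + τ * ‖q - z‖ ^ 2 - τ * (1 - τ) * ‖q - p‖ ^ 2 := by
      simp only [EuclideanSpace.real_norm_sq_eq]
      rw [mul_sum, mul_sum, mul_sum, ← sum_add_distrib, ← sum_sub_distrib]
      refine sum_congr rfl fun a _ => ?_
      simp only [PiLp.add_apply, PiLp.smul_apply, PiLp.sub_apply, smul_eq_mul]
      ring
    have h := hmin _ hmem
    rw [hlin f, hnorm] at h
    refine le_of_mul_le_mul_left ?_ h0
    linarith
  by_contra! hlt
  set X := c * ‖q - p‖ ^ 2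
  have hX : 0 ≤ X := mul_nonneg hc (sq_nonneg _)
  set A := ∑ a : R, p a * f a + c * ‖p - z‖ ^ 2
  set B := ∑ a : R, q a * f a + c * ‖q - z‖ ^ 2
  -- With gap `ε = A + X - B > 0`, the choice `τ = ε / (ε + X)` makes `τ X < ε`.
  have hε : 0 < A + X - B := by linarith
  have hεX : 0 < A + X - B + X := by linarith
  have h := key ((A + X - B) / (A + X - B + X)) (div_pos hε hεX)
    ((div_le_one hεX).2 (by linarith))
  have h2 : (A + X - B) / (A + X - B + X) * X < A + X - B := by
    rw [div_mul_eq_mul_div, div_lt_iff₀ hεX]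
    nlinarith
  linarith

lemma simplex_dist_sq_le {R : Type*} [Fintype R] (p q : EuclideanSpace ℝ R)
    (hp : (∀ a : R, 0 ≤ p a) ∧ ∑ a : R, p a = 1)
    (hq : (∀ a : R, 0 ≤ q a) ∧ ∑ a : R, q a = 1) : ‖p - q‖ ^ 2 ≤ 2 := by
  rw [EuclideanSpace.real_norm_sq_eq]
  calc ∑ a : R, (p - q) a ^ 2 ≤ ∑ a : R, (p a + q a) := by
        refine sum_le_sum fun a _ => ?_
        have h1 : p a ≤ 1 := hp.2 ▸ single_le_sum (fun i _ => hp.1 i) (mem_univ a)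
        have h2 : q a ≤ 1 := hq.2 ▸ single_le_sum (fun i _ => hq.1 i) (mem_univ a)
        have h3 := hp.1 a
        have h4 := hq.1 a
        simp only [PiLp.sub_apply]
        nlinarith [mul_nonneg h3 h4]
    _ = 2 := by rw [sum_add_distrib, hp.2, hq.2]; norm_num

lemma simplex_mean_mem {R : Type*} [Fintype R] (p : EuclideanSpace ℝ R) (f : R → ℝ) (M : ℝ)
    (hp : (∀ a : R, 0 ≤ p a) ∧ ∑ a : R, p a = 1) (hf : ∀ a, 0 ≤ f a ∧ f a ≤ M) :
    0 ≤ ∑ a : R, p a * f a ∧ ∑ a : R, p a * f a ≤ M := by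
  refine ⟨sum_nonneg fun a _ => mul_nonneg (hp.1 a) (hf a).1, ?_⟩
  calc ∑ a : R, p a * f a ≤ ∑ a : R, p a * M :=
        sum_le_sum fun a _ => mul_le_mul_of_nonneg_left (hf a).2 (hp.1 a)
    _ = M := by rw [← sum_mul, hp.2, one_mul]

/-- A nonnegative sequence from `0` with increments at most `ρ`, whose half-square has drift at most
`μ (K - η L k)` up to the telescoping potential `c D`, is bounded: over any window of length `N + 1` it
either does not increase or ends below `B`. -/
lemma drift_bound (L D : ℕ → ℝ) (ρ μ K η c B : ℝ) (N : ℕ) (hμ : 0 < μ) (hη : 0 < η)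
    (hc : 0 ≤ c) (hL0 : L 0 = 0) (hL : ∀ k, 0 ≤ L k) (hinc : ∀ k, L (k + 1) ≤ L k + ρ)
    (hρ : 0 ≤ ρ) (hD : ∀ k, 0 ≤ D k ∧ D k ≤ 2)
    (hstep : ∀ k, (L (k + 1) ^ 2 - L k ^ 2) / 2
      ≤ μ * (K - η * L k + c * (D k - D (k + 1))))
    (hB1 : ρ * N ≤ B)
    (hB2 : (K + 2 * c / (N + 1)) / η + ρ * (N + 2) / 2 ≤ B) : ∀ k, L k ≤ B := by
  have hgrow : ∀ k n : ℕ, L (k + n) ≤ L k + n * ρ := by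
    intro k n
    induction n with
    | zero => simp
    | succ n ih =>
      have := hinc (k + n)
      rw [← add_assoc]
      push_cast
      linarith
  have hsum : ∀ k n : ℕ, (L (k + n) ^ 2 - L k ^ 2) / 2
      ≤ μ * (n * K - η * ∑ i ∈ range n, L (k + i) + c * (D k - D (k + n))) := by
    intro k n
    induction n with
    | zero => simp
    | succ n ih =>
      have := hstep (k + n)
      rw [sum_range_succ, ← add_assoc]
      push_cast
      linarith
  have hback : ∀ n k : ℕ, n * L (k + n) - ρ * (n * (n + 1)) / 2 ≤ ∑ i ∈ range n, L (k + i) := by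
    intro n
    induction n with
    | zero => simp
    | succ n ih =>
      intro k
      have h1 := ih (k + 1)
      have h2 := hgrow k (n + 1)
      rw [sum_range_succ']
      have e1 : ∑ i ∈ range n, L (k + (i + 1)) = ∑ i ∈ range n, L (k + 1 + i) :=
        sum_congr rfl fun i _ => by rw [add_right_comm, add_assoc]
      rw [show k + 1 + n = k + (n + 1) by ring] at h1
      rw [e1, add_zero]
      push_cast at h2 ⊢
      linarith
  intro k
  induction k using Nat.strong_induction_on with
  | _ k ih =>
    rcases le_or_gt k N with hk | hk
    · have h := hgrow 0 k
      rw [zero_add, hL0, zero_add] at h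
      have : (k : ℝ) * ρ ≤ N * ρ := mul_le_mul_of_nonneg_right (by exact_mod_cast hk) hρ
      linarith
    · obtain ⟨s, rfl⟩ : ∃ s, k = s + (N + 1) := ⟨k - (N + 1), by omega⟩
      rcases le_or_gt (L (s + (N + 1))) (L s) with h | h
      · exact h.trans (ih s (by omega))
      · have h1 := hsum s (N + 1)
        have h2 := hback (N + 1) s
        have h3 : 0 < (L (s + (N + 1)) ^ 2 - L s ^ 2) / 2 := by
          nlinarith [hL s]
        have h4 := pos_of_mul_pos_right (h3.trans_le h1) hμ.le
        have h5 : c * (D s - D (s + (N + 1))) ≤ c * 2 :=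
          mul_le_mul_of_nonneg_left (by linarith [(hD s).2, (hD (s + (N + 1))).1]) hc
        have h6 := mul_le_mul_of_nonneg_left h2 hη.le
        have hN : (0 : ℝ) < N + 1 := by positivity
        refine le_trans ?_ hB2
        rw [← sub_le_iff_le_add, le_div_iff₀ hη]
        refine le_of_mul_le_mul_left ?_ hN
        have e : ((N : ℝ) + 1) * (K + 2 * c / (N + 1)) = (N + 1) * K + 2 * c := by
          field_simp
        rw [e]
        push_cast at h4 h6
        linarith

theorem stmt2
    {R : Type*} [Fintype R] [Nonempty R]
    (CR : R → ℝ) (CV CT : R → R → ℝ) (Θ v α μ : ℝ)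
    (hΘ : 0 < Θ) (hv : 0 < v) (hα : 0 < α) (hμ : 0 < μ)
    (hCR : ∀ a : R, 0 ≤ CR a ∧ CR a ≤ Θ)
    (hCV : ∀ a c : R, 0 ≤ CV a c ∧ CV a c ≤ Θ)
    (hCT : ∀ a c : R, 0 ≤ CT a c ∧ CT a c ≤ Θ)
    (b : ℕ → R) (P : ℕ → EuclideanSpace ℝ R) (lam : ℕ → ℝ)
    (hP0 : (∀ a : R, 0 ≤ P 0 a) ∧ ∑ a : R, P 0 a = 1)
    (hlam1 : lam 1 = 0)
    (hPmem : ∀ t : ℕ, 1 ≤ t → (∀ a : R, 0 ≤ P t a) ∧ ∑ a : R, P t a = 1)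
    (hPmin : ∀ t : ℕ, 1 ≤ t → ∀ Q : EuclideanSpace ℝ R,
      ((∀ a : R, 0 ≤ Q a) ∧ ∑ a : R, Q a = 1) →
      (∑ a : R, P t a * CR a) +
        lam t * ((∑ a : R, P t a * (CV a (b (t-1)) + CT a (b (t-1)))) - v) +
        (1/(2*α)) * ‖P t - P (t-1)‖^2 ≤
      (∑ a : R, Q a * CR a) +
        lam t * ((∑ a : R, Q a * (CV a (b (t-1)) + CT a (b (t-1)))) - v) +
        (1/(2*α)) * ‖Q - P (t-1)‖^2)
    (hlam : ∀ t : ℕ, 1 ≤ t →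
      lam (t+1) = max 0 (lam t + μ * ((∑ a : R, P t a * (CV a (b (t-1)) + CT a (b (t-1)))) - v)))
    (Ptilde : EuclideanSpace ℝ R) (η : ℝ) (hη : 0 < η)
    (hPtilde : (∀ a : R, 0 ≤ Ptilde a) ∧ ∑ a : R, Ptilde a = 1)
    (hSlater : ∀ c : R, (∑ a : R, Ptilde a * (CV a c + CT a c)) - v ≤ -η)
    (hvΘ : v ≤ 2*Θ)
    (ℵ : ℕ) (hℵ : 1 ≤ ℵ) :
    ∀ t : ℕ, 1 ≤ t →
      lam t ≤ (max (μ*(2*Θ - v)) ((1/(η*(ℵ:ℝ))) * ((1/2)*μ*(4*Θ^2+v^2) + (α/2)*(Fintype.card R : ℝ)*Θ^2 + 1/(α*((ℵ:ℝ)+1)) + Θ) + (μ*(2*Θ - v))*((ℵ:ℝ)+2)/(2*(ℵ:ℝ)))) * (ℵ:ℝ) := by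
  have hmem : ∀ k, (∀ a : R, 0 ≤ P k a) ∧ ∑ a : R, P k a = 1 := by
    intro k
    rcases Nat.eq_zero_or_pos k with rfl | h
    · exact hP0
    · exact hPmem k h
  have hN : (0 : ℝ) < ℵ := by exact_mod_cast hℵ
  have hnn : ∀ k, 0 ≤ lam (k + 1) := by
    intro k
    rcases Nat.eq_zero_or_pos k with rfl | h
    · exact hlam1.ge
    · rw [hlam k h]; exact le_max_left _ _
  have hg : ∀ k, 0 ≤ ∑ a : R, P (k + 1) a * (CV a (b k) + CT a (b k)) ∧
      ∑ a : R, P (k + 1) a * (CV a (b k) + CT a (b k)) ≤ 2 * Θ := by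
    intro k
    refine simplex_mean_mem _ _ _ (hmem _) fun a => ?_
    have h1 := hCV a (b k)
    have h2 := hCT a (b k)
    constructor <;> linarith
  have hρ : 0 ≤ μ * (2 * Θ - v) := mul_nonneg hμ.le (by linarith)
  have hrec : ∀ k, lam (k + 1 + 1) = max 0 (lam (k + 1) +
      μ * ((∑ a : R, P (k + 1) a * (CV a (b k) + CT a (b k))) - v)) :=
    fun k => hlam (k + 1) (by omega)
  have hbound := drift_bound (fun k => lam (k + 1)) (fun k => ‖Ptilde - P k‖ ^ 2)
    (μ * (2 * Θ - v)) μ (Θ + μ * (4 * Θ ^ 2 + v ^ 2) / 2) η (1 / (2 * α))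
    ((max (μ*(2*Θ - v)) ((1/(η*(ℵ:ℝ))) * ((1/2)*μ*(4*Θ^2+v^2) + (α/2)*(Fintype.card R : ℝ)*Θ^2 + 1/(α*((ℵ:ℝ)+1)) + Θ) + (μ*(2*Θ - v))*((ℵ:ℝ)+2)/(2*(ℵ:ℝ)))) * (ℵ:ℝ))
    ℵ hμ hη (by positivity) hlam1 hnn ?_ hρ
    (fun k => ⟨sq_nonneg _, simplex_dist_sq_le _ _ hPtilde (hmem k)⟩) ?_ ?_ ?_
  · intro t ht
    obtain ⟨k, rfl⟩ : ∃ k, t = k + 1 := ⟨t - 1, by omega⟩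
    exact hbound k
  · intro k
    simp only [hrec k]
    refine max_le (add_nonneg (hnn k) hρ) ?_
    have := mul_le_mul_of_nonneg_left (sub_le_sub_right (hg k).2 v) hμ.le
    linarith
  · intro k
    have hlin : ∀ Q : EuclideanSpace ℝ R, (∑ a : R, Q a = 1) →
        ∑ a : R, Q a * (CR a + lam (k + 1) * (CV a (b k) + CT a (b k) - v))
          = (∑ a : R, Q a * CR a)
            + lam (k + 1) * ((∑ a : R, Q a * (CV a (b k) + CT a (b k))) - v) := by
      intro Q hQ
      have hv' : v = ∑ a : R, Q a * v := by rw [← sum_mul, hQ, one_mul]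
      conv_rhs => rw [hv']
      rw [← sum_sub_distrib, mul_sum, ← sum_add_distrib]
      exact sum_congr rfl fun a _ => by ring
    have h3 := prox_three_point_s2 (P (k + 1)) (P k) Ptilde
      (fun a => CR a + lam (k + 1) * (CV a (b k) + CT a (b k) - v)) (1 / (2 * α))
      (by positivity) (hmem _) hPtilde (by
        intro Q hQ
        rw [hlin _ (hmem _).2, hlin _ hQ.2]
        exact hPmin (k + 1) (by omega) Q hQ)
    rw [hlin _ (hmem _).2, hlin _ hPtilde.2] at h3
    have hS := mul_le_mul_of_nonneg_left (hSlater (b k)) (hnn k)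
    have hC1 := (simplex_mean_mem _ CR Θ (hmem (k + 1)) hCR).1
    have hC2 := (simplex_mean_mem _ CR Θ hPtilde hCR).2
    have hd : 0 ≤ 1 / (2 * α) * ‖P (k + 1) - P k‖ ^ 2 := by positivity
    obtain ⟨hg0, hg1⟩ := hg k
    have hr := hrec k
    set G := ∑ a : R, P (k + 1) a * (CV a (b k) + CT a (b k))
    have hsq : lam (k + 1 + 1) ^ 2 ≤ (lam (k + 1) + μ * (G - v)) ^ 2 := by
      rw [hr]
      rcases max_cases 0 (lam (k + 1) + μ * (G - v)) with ⟨h, _⟩ | ⟨h, _⟩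
      · rw [h]; nlinarith [sq_nonneg (lam (k + 1) + μ * (G - v))]
      · rw [h]
    have hG2 : (G - v) ^ 2 ≤ 4 * Θ ^ 2 + v ^ 2 := by nlinarith
    have hlg : lam (k + 1) * (G - v) ≤ Θ - η * lam (k + 1)
        + 1 / (2 * α) * (‖Ptilde - P k‖ ^ 2 - ‖Ptilde - P (k + 1)‖ ^ 2) := by linarith
    have h5 := mul_le_mul_of_nonneg_left hlg hμ.le
    have h6 := mul_le_mul_of_nonneg_left hG2 (sq_nonneg μ)
    linarith
  · exact mul_le_mul_of_nonneg_right (le_max_left _ _) hN.le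
  · refine le_trans ?_ (mul_le_mul_of_nonneg_right (le_max_right _ _) hN.le)
    -- The term `(α/2)|R|Θ²` of `χ` is not needed: `E[C_R]` at two points differs by at most `Θ`.
    have hx : 0 ≤ (α / 2) * (Fintype.card R : ℝ) * Θ ^ 2 / η := by positivity
    have e : ((1/(η*(ℵ:ℝ))) * ((1/2)*μ*(4*Θ^2+v^2) + (α/2)*(Fintype.card R : ℝ)*Θ^2 + 1/(α*((ℵ:ℝ)+1)) + Θ) + (μ*(2*Θ - v))*((ℵ:ℝ)+2)/(2*(ℵ:ℝ))) * (ℵ:ℝ)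
        = (Θ + μ * (4 * Θ ^ 2 + v ^ 2) / 2 + 2 * (1 / (2 * α)) / ((ℵ : ℝ) + 1)) / η
          + μ * (2 * Θ - v) * ((ℵ : ℝ) + 2) / 2
          + (α / 2) * (Fintype.card R : ℝ) * Θ ^ 2 / η := by
      field_simp
      ring
    rw [e]
    linarith
end

section
/- Let K ≥ 1 and t ≥ 1 be integers, and let P* ∈ P(R) satisfy the K-slot window constraint Σ_{τ=0}^{K-1} ( E_{P*}[C(·, b^{t+τ-1})] − v ) ≤ 0. Then the dual variables of Algorithm 1 satisfy Σ_{τ=0}^{K-1} λ_{t+τ} ( E_{P*}[C(·, b^{t+τ-1})] − v ) ≤ (1/2) K (K−1) μ (4Θ² + v²). -/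
/-!
Every slot value `g = E_p[C(·, c)] − v` lies in `[-v, 2Θ − v]`, so `g² ≤ 4Θ² + v² =: M²`. Projection
onto `[0, ∞)` is nonexpansive, hence the dual variable moves by at most `μ M` per slot and
`|λ_{t+τ} − λ_t| ≤ τ μ M`. Replacing `λ_{t+τ}` by `λ_t` in the weighted sum therefore costs at most
`τ μ M²` in slot `τ`, which adds up to `K (K − 1) μ M² / 2`; what remains is `λ_t ≥ 0` times the
window sum, which is nonpositive.
-/

open Finset

/-- Expected slot cost minus the budget is bounded in absolute value by `√(4Θ² + v²)`. -/
lemma abs_expectation_sub_le {R : Type*} [Fintype R] (p f : R → ℝ) (Θ v : ℝ)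
    (hΘ : 0 < Θ) (hv : 0 < v) (hp : ∀ a, 0 ≤ p a) (hp1 : ∑ a, p a = 1)
    (hf : ∀ a, 0 ≤ f a ∧ f a ≤ 2 * Θ) :
    |(∑ a, p a * f a) - v| ≤ √(4 * Θ ^ 2 + v ^ 2) := by
  have h0 : 0 ≤ ∑ a, p a * f a := Finset.sum_nonneg fun a _ => mul_nonneg (hp a) (hf a).1
  have h1 : ∑ a, p a * f a ≤ 2 * Θ := by
    calc ∑ a, p a * f a ≤ ∑ a, p a * (2 * Θ) :=
          Finset.sum_le_sum fun a _ => mul_le_mul_of_nonneg_left (hf a).2 (hp a)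
      _ = 2 * Θ := by rw [← Finset.sum_mul, hp1, one_mul]
  apply Real.abs_le_sqrt
  nlinarith [mul_nonneg h0 hv.le, mul_nonneg h0 (sub_nonneg.2 h1)]

/-- A projected dual step moves a nonnegative multiplier by at most the length of the raw step. -/
lemma abs_max_zero_add_sub_le (l x : ℝ) (hl : 0 ≤ l) : |max 0 (l + x) - l| ≤ |x| := by
  have h := abs_max_sub_max_le_abs (l + x) l 0
  rwa [max_comm, max_eq_left hl, add_sub_cancel_left] at h

theorem stmt6
    {R : Type*} [Fintype R] [Nonempty R]
    (CR : R → ℝ) (CV CT : R → R → ℝ) (Θ v α μ : ℝ)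
    (hΘ : 0 < Θ) (hv : 0 < v) (hα : 0 < α) (hμ : 0 < μ)
    (hCR : ∀ a : R, 0 ≤ CR a ∧ CR a ≤ Θ)
    (hCV : ∀ a c : R, 0 ≤ CV a c ∧ CV a c ≤ Θ)
    (hCT : ∀ a c : R, 0 ≤ CT a c ∧ CT a c ≤ Θ)
    (b : ℕ → R) (P : ℕ → EuclideanSpace ℝ R) (lam : ℕ → ℝ)
    (hP0 : (∀ a : R, 0 ≤ P 0 a) ∧ ∑ a : R, P 0 a = 1)
    (hlam1 : 0 ≤ lam 1)
    (hPmem : ∀ t : ℕ, 1 ≤ t → (∀ a : R, 0 ≤ P t a) ∧ ∑ a : R, P t a = 1)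
    (hPmin : ∀ t : ℕ, 1 ≤ t → ∀ Q : EuclideanSpace ℝ R,
      ((∀ a : R, 0 ≤ Q a) ∧ ∑ a : R, Q a = 1) →
      (∑ a : R, P t a * CR a) +
        lam t * ((∑ a : R, P t a * (CV a (b (t-1)) + CT a (b (t-1)))) - v) +
        (1/(2*α)) * ‖P t - P (t-1)‖^2 ≤
      (∑ a : R, Q a * CR a) +
        lam t * ((∑ a : R, Q a * (CV a (b (t-1)) + CT a (b (t-1)))) - v) +
        (1/(2*α)) * ‖Q - P (t-1)‖^2)
    (hlam : ∀ t : ℕ, 1 ≤ t →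
      lam (t+1) = max 0 (lam t + μ * ((∑ a : R, P t a * (CV a (b (t-1)) + CT a (b (t-1)))) - v)))
    (K t : ℕ) (hK : 1 ≤ K) (ht : 1 ≤ t)
    (Pstar : EuclideanSpace ℝ R)
    (hPstar : (∀ a : R, 0 ≤ Pstar a) ∧ ∑ a : R, Pstar a = 1)
    (hwin : ∑ τ ∈ Finset.range K,
        ((∑ a : R, Pstar a * (CV a (b (t+τ-1)) + CT a (b (t+τ-1)))) - v) ≤ 0) :
    ∑ τ ∈ Finset.range K,
        lam (t+τ) * ((∑ a : R, Pstar a * (CV a (b (t+τ-1)) + CT a (b (t+τ-1)))) - v) ≤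
      (1/2) * (K:ℝ) * ((K:ℝ) - 1) * μ * (4*Θ^2 + v^2) := by
  set M : ℝ := √(4 * Θ ^ 2 + v ^ 2) with hM
  have hMsq : M * M = 4 * Θ ^ 2 + v ^ 2 := Real.mul_self_sqrt (by positivity)
  have hM0 : 0 ≤ M := Real.sqrt_nonneg _
  have hC : ∀ c a : R, 0 ≤ CV a c + CT a c ∧ CV a c + CT a c ≤ 2 * Θ := fun c a =>
    ⟨add_nonneg (hCV a c).1 (hCT a c).1, by linarith [(hCV a c).2, (hCT a c).2]⟩
  have hlam_nonneg : ∀ s, 1 ≤ s → 0 ≤ lam s := by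
    intro s hs
    obtain rfl | hs' := hs.eq_or_lt
    · exact hlam1
    · obtain ⟨r, rfl⟩ : ∃ r, s = r + 1 := ⟨s - 1, by omega⟩
      rw [hlam r (by omega)]
      exact le_max_left _ _
  have hstep : ∀ s, 1 ≤ s → |lam (s + 1) - lam s| ≤ μ * M := by
    intro s hs
    rw [hlam s hs]
    refine (abs_max_zero_add_sub_le _ _ (hlam_nonneg s hs)).trans ?_
    rw [abs_mul, abs_of_pos hμ]
    exact mul_le_mul_of_nonneg_left
      (abs_expectation_sub_le _ _ Θ v hΘ hv (hPmem s hs).1 (hPmem s hs).2 (hC _)) hμ.le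
  have hdrift : ∀ τ : ℕ, |lam (t + τ) - lam t| ≤ τ * (μ * M) := by
    intro τ
    induction τ with
    | zero => simp
    | succ n ih =>
      have h := hstep (t + n) (by omega)
      have h' := abs_sub_le (lam (t + n + 1)) (lam (t + n)) (lam t)
      rw [← add_assoc]
      push_cast
      linarith
  set g : ℕ → ℝ := fun τ =>
    (∑ a : R, Pstar a * (CV a (b (t+τ-1)) + CT a (b (t+τ-1)))) - v with hg
  have hgM : ∀ τ, |g τ| ≤ M := fun τ =>
    abs_expectation_sub_le _ _ Θ v hΘ hv hPstar.1 hPstar.2 (hC _)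
  have hterm : ∀ τ : ℕ, lam (t + τ) * g τ ≤ lam t * g τ + τ * (μ * (M * M)) := by
    intro τ
    have h1 : (lam (t + τ) - lam t) * g τ ≤ τ * (μ * M) * M :=
      (le_abs_self _).trans <| by
        rw [abs_mul]
        exact mul_le_mul (hdrift τ) (hgM τ) (abs_nonneg _) (by positivity)
    linarith
  have hgauss : ∀ n : ℕ, ∑ τ ∈ Finset.range n, (τ : ℝ) = 1 / 2 * n * (n - 1) := by
    intro n
    induction n with
    | zero => simp
    | succ n ih => rw [Finset.sum_range_succ, ih]; push_cast; ring
  calc ∑ τ ∈ Finset.range K, lam (t + τ) * g τ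
      ≤ ∑ τ ∈ Finset.range K, (lam t * g τ + τ * (μ * (M * M))) :=
        Finset.sum_le_sum fun τ _ => hterm τ
    _ = lam t * ∑ τ ∈ Finset.range K, g τ + 1 / 2 * K * (K - 1) * (μ * (M * M)) := by
        rw [Finset.sum_add_distrib, ← Finset.mul_sum, ← Finset.sum_mul, hgauss]
    _ ≤ 1 / 2 * K * (K - 1) * (μ * (M * M)) := by
        linarith [mul_nonpos_of_nonneg_of_nonpos (hlam_nonneg t ht) hwin]
    _ = (1/2) * (K:ℝ) * ((K:ℝ) - 1) * μ * (4*Θ^2 + v^2) := by rw [hMsq]; ring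
end

section
/- Assume λ_1 = 0. Then for all integers 1 ≤ K ≤ T, the dual variables of Algorithm 1 satisfy Σ_{τ=0}^{K-1} Σ_{t=1}^{T-K} Δ(λ_{t+τ})/μ ≥ − μ (2Θ + v)² (K−1) K (2K−1) / 6, where Δ(λ_s) := (1/2)(λ_{s+1}² − λ_s²). -/
/-!
For fixed `τ` the inner sum telescopes to `(λ_{T-K+τ+1}² - λ_{τ+1}²) / (2μ) ≥ -λ_{τ+1}² / (2μ)`.
Each dual step raises `λ` by at most `μ (2Θ + v)`, because the expected cost is at most `2Θ`, so
`λ_1 = 0` gives `0 ≤ λ_{τ+1} ≤ τ μ (2Θ + v)`. Summing `τ²` over `τ < K` yields the bound, with a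
factor `1/2` to spare.
-/

open Finset

theorem sum_Icc_sub_shift (f : ℕ → ℝ) (N τ : ℕ) :
    ∑ t ∈ Finset.Icc 1 N, (f (t + τ + 1) - f (t + τ)) = f (N + τ + 1) - f (τ + 1) := by
  induction N with
  | zero => simp
  | succ n ih =>
    rw [Finset.sum_Icc_succ_top (by omega), ih, show n + 1 + τ = n + τ + 1 by omega]
    ring

theorem sum_range_sq (K : ℕ) :
    ∑ τ ∈ Finset.range K, (τ : ℝ) ^ 2 = ((K : ℝ) - 1) * K * (2 * K - 1) / 6 := by
  induction K with
  | zero => simp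
  | succ n ih =>
    rw [Finset.sum_range_succ, ih]
    push_cast
    ring

theorem stmt7
    {R : Type*} [Fintype R] [Nonempty R]
    (CR : R → ℝ) (CV CT : R → R → ℝ) (Θ v α μ : ℝ)
    (hΘ : 0 < Θ) (hv : 0 < v) (hα : 0 < α) (hμ : 0 < μ)
    (hCR : ∀ a : R, 0 ≤ CR a ∧ CR a ≤ Θ)
    (hCV : ∀ a c : R, 0 ≤ CV a c ∧ CV a c ≤ Θ)
    (hCT : ∀ a c : R, 0 ≤ CT a c ∧ CT a c ≤ Θ)
    (b : ℕ → R) (P : ℕ → EuclideanSpace ℝ R) (lam : ℕ → ℝ)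
    (hP0 : (∀ a : R, 0 ≤ P 0 a) ∧ ∑ a : R, P 0 a = 1)
    (hlam1 : lam 1 = 0)
    (hPmem : ∀ t : ℕ, 1 ≤ t → (∀ a : R, 0 ≤ P t a) ∧ ∑ a : R, P t a = 1)
    (hPmin : ∀ t : ℕ, 1 ≤ t → ∀ Q : EuclideanSpace ℝ R,
      ((∀ a : R, 0 ≤ Q a) ∧ ∑ a : R, Q a = 1) →
      (∑ a : R, P t a * CR a) +
        lam t * ((∑ a : R, P t a * (CV a (b (t-1)) + CT a (b (t-1)))) - v) +
        (1/(2*α)) * ‖P t - P (t-1)‖^2 ≤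
      (∑ a : R, Q a * CR a) +
        lam t * ((∑ a : R, Q a * (CV a (b (t-1)) + CT a (b (t-1)))) - v) +
        (1/(2*α)) * ‖Q - P (t-1)‖^2)
    (hlam : ∀ t : ℕ, 1 ≤ t →
      lam (t+1) = max 0 (lam t + μ * ((∑ a : R, P t a * (CV a (b (t-1)) + CT a (b (t-1)))) - v)))
    (K T : ℕ) (hK : 1 ≤ K) (hKT : K ≤ T) :
    -(μ * (2*Θ + v)^2 * ((K:ℝ) - 1) * (K:ℝ) * (2*(K:ℝ) - 1) / 6) ≤
      ∑ τ ∈ Finset.range K, ∑ t ∈ Finset.Icc 1 (T - K),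
        (1/2) * ((lam (t+τ+1))^2 - (lam (t+τ))^2) / μ := by
  have hE : ∀ t : ℕ, 1 ≤ t →
      ∑ a : R, P t a * (CV a (b (t-1)) + CT a (b (t-1))) ≤ 2 * Θ := by
    intro t ht
    calc ∑ a : R, P t a * (CV a (b (t-1)) + CT a (b (t-1)))
        ≤ ∑ a : R, P t a * (2 * Θ) := by
          refine Finset.sum_le_sum fun a _ => mul_le_mul_of_nonneg_left ?_ ((hPmem t ht).1 a)
          linarith [(hCV a (b (t-1))).2, (hCT a (b (t-1))).2]
      _ = 2 * Θ := by rw [← Finset.sum_mul, (hPmem t ht).2, one_mul]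
  have hbound : ∀ n : ℕ, 0 ≤ lam (n + 1) ∧ lam (n + 1) ≤ n * (μ * (2 * Θ + v)) := by
    intro n
    induction n with
    | zero => simp [hlam1]
    | succ n ih =>
      have hstep := mul_le_mul_of_nonneg_left (hE (n + 1) (by omega)) hμ.le
      have hμv : 0 < μ * v := mul_pos hμ hv
      rw [hlam (n + 1) (by omega)]
      refine ⟨le_max_left _ _, max_le (by positivity) ?_⟩
      rw [Nat.cast_succ]
      linarith [ih.2]
  have hinner : ∀ τ : ℕ, -(μ * (2 * Θ + v) ^ 2 / 2 * (τ : ℝ) ^ 2) ≤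
      ∑ t ∈ Finset.Icc 1 (T - K), (1/2) * ((lam (t+τ+1))^2 - (lam (t+τ))^2) / μ := by
    intro τ
    rw [← Finset.sum_div, ← Finset.mul_sum, sum_Icc_sub_shift (fun s => lam s ^ 2), le_div_iff₀ hμ]
    have hsq := pow_le_pow_left₀ (hbound τ).1 (hbound τ).2 2
    linarith [sq_nonneg (lam (T - K + τ + 1))]
  refine le_trans ?_ (Finset.sum_le_sum fun τ _ => hinner τ)
  rw [Finset.sum_neg_distrib, ← Finset.mul_sum, neg_le_neg_iff]
  -- The sum of squares is nonnegative, so the constant `1/2` may be relaxed to `1`.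
  have hS : 0 ≤ ∑ τ ∈ Finset.range K, (τ : ℝ) ^ 2 := Finset.sum_nonneg fun τ _ => sq_nonneg _
  have hc : 0 ≤ μ * (2 * Θ + v) ^ 2 := by positivity
  have hprod := mul_nonneg hc hS
  rw [sum_range_sq] at hprod ⊢
  linarith
end
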